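/- Let I ⊆ ℝ be a closed bounded interval and f : I → I a continuous map admitting no 2-cycle. Then f is universal for the first Sharkovsky class if and only if there exists a point p ∈ I with f(p) = p such that for every r > 0: inf f([p, p + r] ∩ I) < p < sup f([p, p + r] ∩ I) and inf f([p − r, p] ∩ I) < p < sup f([p − r, p] ∩ I). -/

import Mathlib

/-- `f`, viewed as an interval map on `[a,b]`, is universal for the first Sharkovsky
class: every orbit pattern of any interval map with no 2-cycle occurs as an orbit
pattern of `f`. -/
def IsUniversalF1 (a b : ℝ) (f : ℝ → ℝ) : Prop :=
  ∀ c d : ℝ, c ≤ d → ∀ g : ℝ → ℝ,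
    ContinuousOn g (Set.Icc c d) →
    Set.MapsTo g (Set.Icc c d) (Set.Icc c d) →
    (¬ ∃ x ∈ Set.Icc c d, ∃ y ∈ Set.Icc c d, x ≠ y ∧ g x = y ∧ g y = x) →
    ∀ p ∈ Set.Icc c d, ∃ q ∈ Set.Icc a b,
      ∀ m n : ℕ, (g^[m] p < g^[n] p ↔ f^[m] q < f^[n] q)

/-!
For a map without 2-cycles, a point `x` and its image determine on which side of `x` the whole
future orbit lies, so an orbit pattern is encoded by the sequence of comparisons of `xₙ` with
`xₙ₊₁`. If `f` sends points arbitrarily close to a fixed point `p`, on both sides of it, to both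
sides of it, then every such sequence is realized by `f`: short intervals `Kₙ` on the prescribed
sides, each much closer to `p` than its predecessor, can be chosen with `Kₙ₊₁ ⊆ f(Kₙ)`.

Conversely, the map `x ↦ x cos(1/x) / 2` has no 2-cycle and oscillates in this way at `0`, hence
has an orbit with comparison sequence `<, <, >, >, <, <, >, >, …`. An orbit of `f` with this
pattern has an increasing and a decreasing part, whose limits are forced to be one and the same
fixed point of `f`, and the four possible transitions between the two parts all occur infinitely
often.
-/

open Set Filter Topology

section Combinatorics

variable {α β : Type*} [LinearOrder α] [LinearOrder β]

theorem exists_straddle_of_iterate_le {f : α → α} {x : α} (hx : x < f x) {n : ℕ}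
    (hn : f^[n + 1] x ≤ x) :
    ∃ i j, f^[i] x < f^[j] x ∧ f^[j] x ≤ f^[i + 1] x ∧ f^[j + 1] x ≤ f^[i] x := by
  induction n using Nat.strong_induction_on with | _ n ih
  by_cases hfirst : ∃ k < n, f^[k + 1] x ≤ x
  · obtain ⟨k, hkn, hk⟩ := hfirst
    exact ih k hkn hk
  push Not at hfirst
  have hge : ∀ k ≤ n, x ≤ f^[k] x
    | 0, _ => le_rfl
    | k + 1, hk => (hfirst k hk).le
  -- `i` is the highest rising time, and `j` the lowest time above `i`.
  obtain ⟨i, hi, hi_max⟩ := ((Finset.range (n + 1)).filter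
    fun k ↦ f^[k] x < f^[k + 1] x).exists_max_image (f^[·] x) ⟨0, Finset.mem_filter.2 ⟨by simp, hx⟩⟩
  simp only [Finset.mem_filter, Finset.mem_range, Nat.lt_succ_iff, and_imp] at hi hi_max
  have hin : i < n := hi.1.lt_of_ne fun h ↦ by
    subst h; exact (hn.trans (hge _ le_rfl)).not_gt hi.2
  obtain ⟨j, hj, hj_min⟩ := ((Finset.range (n + 1)).filter
    fun k ↦ f^[i] x < f^[k] x).exists_min_image (f^[·] x)
      ⟨i + 1, Finset.mem_filter.2 ⟨by simpa using hin, hi.2⟩⟩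
  simp only [Finset.mem_filter, Finset.mem_range, Nat.lt_succ_iff, and_imp] at hj hj_min
  refine ⟨i, j, hj.2, hj_min _ hin hi.2, not_lt.1 fun hlt ↦ ?_⟩
  have hret : f^[n + 1] x < f^[j] x := (hn.trans (hge i hi.1)).trans_lt hj.2
  have hjn : j < n := hj.1.lt_of_ne fun h ↦ by
    subst h; exact (hn.trans (hge i hi.1)).not_gt hlt
  rcases (hj_min _ hjn hlt).lt_or_eq with hrise | hfix
  · exact (hi_max j hj.1 hrise).not_gt hj.2
  · rw [Function.iterate_succ_apply'] at hfix
    have hconst := (show Function.IsFixedPt f (f^[j] x) from hfix.symm).iterate (n + 1 - j)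
    rw [Function.IsFixedPt, ← Function.iterate_add_apply, Nat.sub_add_cancel (by omega)] at hconst
    exact hret.ne hconst

/-- The order pattern of a sequence `x` all of whose terms are on one side of each earlier term:
`s n` says how `x n` compares with every later term. -/
def HasPattern (s : ℕ → Ordering) (x : ℕ → α) : Prop :=
  ∀ ⦃m n⦄, m < n → cmp (x m) (x n) = s m

namespace HasPattern

variable {s : ℕ → Ordering} {x : ℕ → α} {y : ℕ → β}

theorem lt_iff_lt (hx : HasPattern s x) (hy : HasPattern s y) (m n : ℕ) :
    x m < x n ↔ y m < y n := by
  apply lt_iff_lt_of_cmp_eq_cmp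
  rcases lt_trichotomy m n with h | rfl | h
  · rw [hx h, hy h]
  · simp only [cmp_self_eq_eq]
  · rw [cmp_eq_cmp_symm, hx h, hy h]

theorem of_lt_iff_lt (hx : HasPattern s x) (h : ∀ m n, x m < x n ↔ y m < y n) :
    HasPattern s y := fun m n hmn ↦ by
  rw [← hx hmn]
  simp only [cmp, cmpUsing, h]

theorem succ_eq_eq (hx : HasPattern s x) {n : ℕ} (h : s n = .eq) : s (n + 1) = .eq := by
  have h₁ : x n = x (n + 1) := cmp_eq_eq_iff _ _ |>.1 <| (hx n.lt_succ_self).trans h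
  have h₂ : x n = x (n + 2) := cmp_eq_eq_iff _ _ |>.1 <| (hx (by omega)).trans h
  rw [← hx (n + 1).lt_succ_self, ← h₁, ← h₂, cmp_self_eq_eq]

theorem dual (hx : HasPattern s x) : HasPattern (fun n ↦ (s n).swap) (OrderDual.toDual ∘ x) :=
  fun m n hmn ↦ by
    rw [Function.comp_apply, Function.comp_apply, cmp_toDual, ← cmp_swap, hx hmn]

end HasPattern

end Combinatorics

section NoTwoCycle

/-- The self-map `f` of `[a, b]` belongs to the first Sharkovsky class `𝓕₁`. The absence of
2-cycles is phrased as in `IsUniversalF1`. -/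
structure FirstSharkovsky {α : Type*} [Preorder α] [TopologicalSpace α] (a b : α) (f : α → α) :
    Prop where
  continuousOn : ContinuousOn f (Icc a b)
  mapsTo : MapsTo f (Icc a b) (Icc a b)
  not_twoCycle : ¬ ∃ x ∈ Icc a b, ∃ y ∈ Icc a b, x ≠ y ∧ f x = y ∧ f y = x

namespace FirstSharkovsky

theorem dual {α : Type*} [Preorder α] [TopologicalSpace α] {a b : α} {f : α → α}
    (hf : FirstSharkovsky a b f) :
    FirstSharkovsky (OrderDual.toDual b) (OrderDual.toDual a)
      (OrderDual.toDual ∘ f ∘ OrderDual.ofDual) := by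
  constructor <;> rw [Icc_toDual]
  exacts [hf.continuousOn, hf.mapsTo, hf.not_twoCycle]

variable {α : Type*} [ConditionallyCompleteLinearOrder α] [TopologicalSpace α] [OrderTopology α]
  [DenselyOrdered α] {a b x y : α} {f : α → α}

theorem exists_isFixedPt_of_map_map (hf : FirstSharkovsky a b f) (hx : x ∈ Icc a b)
    (hy : y ∈ Icc a b) (hxy : x ≤ y) (hfx : x ≤ f (f x)) (hfy : f (f y) ≤ y) :
    ∃ u ∈ Icc x y, f u = u := by
  have hsub : Icc x y ⊆ Icc a b := Icc_subset_Icc hx.1 hy.2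
  obtain ⟨u, hu, hffu⟩ := exists_mem_Icc_isFixedPt
    ((hf.continuousOn.comp hf.continuousOn hf.mapsTo).mono hsub) hxy hfx hfy
  refine ⟨u, hu, by_contra fun hne ↦ hf.not_twoCycle ?_⟩
  exact ⟨u, hsub hu, f u, hf.mapsTo (hsub hu), Ne.symm hne, rfl, hffu⟩

theorem lt_map_map (hf : FirstSharkovsky a b f) (hx : x ∈ Icc a b) (hfx : x < f x) :
    x < f (f x) := by
  by_contra! hle
  have ha : a ∈ Icc a b := left_mem_Icc.2 (hx.1.trans hx.2)
  have hfix : {y ∈ Icc a x | f y = y}.Nonempty :=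
    hf.exists_isFixedPt_of_map_map ha hx hx.1 (hf.mapsTo (hf.mapsTo ha)).1 hle
  have hcont : ContinuousOn f (Icc a x) := hf.continuousOn.mono (Icc_subset_Icc_right hx.2)
  have hclosed : IsClosed {y ∈ Icc a x | f y = y} :=
    (hcont.prodMk continuousOn_id).preimage_isClosed_of_isClosed isClosed_Icc isClosed_diagonal
  obtain ⟨u, ⟨hu, hfu⟩, hu_max⟩ :=
    (isCompact_Icc.of_isClosed_subset hclosed fun _ h ↦ h.1).exists_isGreatest hfix
  obtain ⟨y, hy, hfy⟩ : ∃ y ∈ Icc u x, f y = x :=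
    intermediate_value_Icc hu.2 (hcont.mono (Icc_subset_Icc_left hu.1))
      ⟨hfu.le.trans hu.2, hfx.le⟩
  obtain ⟨v, hv, hfv⟩ : ∃ v ∈ Icc y x, f v = v :=
    hf.exists_isFixedPt_of_map_map ⟨(hu.1.trans hy.1), hy.2.trans hx.2⟩ hx hy.2
      (by rw [hfy]; exact hy.2.trans hfx.le) hle
  have hvu : v ≤ u := hu_max ⟨⟨(hu.1.trans hy.1).trans hv.1, hv.2⟩, hfv⟩
  obtain rfl : v = y := (hvu.trans hy.1).antisymm hv.1
  exact hfx.ne' (by rw [← hfy, hfv, hfv])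

theorem not_straddle (hf : FirstSharkovsky a b f) (hx : x ∈ Icc a b) (hy : y ∈ Icc a b)
    (hxy : x < y) (hfx : y ≤ f x) : x < f y := by
  by_contra! hfy
  have hsub : Icc x y ⊆ Icc a b := Icc_subset_Icc hx.1 hy.2
  obtain ⟨u, hu, hfu⟩ : ∃ u ∈ Icc x y, f u = y :=
    intermediate_value_Icc' hxy.le (hf.continuousOn.mono hsub) ⟨hfy.trans hxy.le, hfx⟩
  have huy : u < y := hu.2.lt_of_ne fun h ↦ (hfy.trans_lt hxy).ne (h ▸ hfu)
  have hlt := hf.lt_map_map (hsub hu) (huy.trans_eq hfu.symm)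
  rw [hfu] at hlt
  exact (hfy.trans hu.1).not_gt hlt

theorem lt_iterate_succ (hf : FirstSharkovsky a b f) (hx : x ∈ Icc a b) (hfx : x < f x) (n : ℕ) :
    x < f^[n + 1] x := by
  by_contra! hle
  obtain ⟨i, j, hij, hji, hle⟩ := exists_straddle_of_iterate_le hfx hle
  rw [Function.iterate_succ_apply'] at hji hle
  exact hle.not_gt <|
    hf.not_straddle (hf.mapsTo.iterate i hx) (hf.mapsTo.iterate j hx) hij hji

theorem cmp_iterate_succ (hf : FirstSharkovsky a b f) (hx : x ∈ Icc a b) (n : ℕ) :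
    cmp x (f^[n + 1] x) = cmp x (f x) := by
  rcases lt_trichotomy x (f x) with h | h | h
  · rw [h.cmp_eq_lt, (hf.lt_iterate_succ hx h n).cmp_eq_lt]
  · rw [Function.iterate_fixed h.symm, ← h]
  · have hdual := hf.dual.lt_iterate_succ (x := OrderDual.toDual x) ⟨hx.2, hx.1⟩ h n
    have hsemi : Function.Semiconj OrderDual.toDual f
      (OrderDual.toDual ∘ f ∘ OrderDual.ofDual) := fun _ ↦ rfl
    rw [← hsemi.iterate_right] at hdual
    rw [h.cmp_eq_gt, (OrderDual.toDual_lt_toDual.1 hdual).cmp_eq_gt]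

theorem exists_hasPattern_iterate (hf : FirstSharkovsky a b f) (hx : x ∈ Icc a b) :
    ∃ s, HasPattern s fun n ↦ f^[n] x := by
  refine ⟨fun n ↦ cmp (f^[n] x) (f (f^[n] x)), fun m n hmn ↦ ?_⟩
  obtain ⟨k, rfl⟩ := Nat.exists_eq_add_of_lt hmn
  dsimp only
  rw [← hf.cmp_iterate_succ (hf.mapsTo.iterate m hx) k, ← Function.iterate_add_apply,
    show k + 1 + m = m + k + 1 by omega]

end FirstSharkovsky

end NoTwoCycle

theorem isCompact_and_nonempty_setOf_iterate_mem {X : Type*} [TopologicalSpace X] [T2Space X]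
    {f : X → X} {K : ℕ → Set X} (hf : ∀ n, ContinuousOn f (K n)) (hK : ∀ n, IsCompact (K n))
    (hK₀ : ∀ n, (K n).Nonempty) (hsub : ∀ n, K (n + 1) ⊆ f '' K n) (N : ℕ) :
    IsCompact {x | ∀ n ≤ N, f^[n] x ∈ K n} ∧ {x | ∀ n ≤ N, f^[n] x ∈ K n}.Nonempty := by
  induction N generalizing K with
  | zero => simpa using ⟨hK 0, hK₀ 0⟩
  | succ N ih =>
    obtain ⟨hcompact, y, hy⟩ := ih (fun n ↦ hf (n + 1)) (fun n ↦ hK (n + 1))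
      (fun n ↦ hK₀ (n + 1)) fun n ↦ hsub (n + 1)
    have hrec : {x | ∀ n ≤ N + 1, f^[n] x ∈ K n} =
        K 0 ∩ f ⁻¹' {x | ∀ n ≤ N, f^[n] x ∈ K (n + 1)} := by
      ext x
      refine ⟨fun h ↦ ⟨h 0 (by omega), fun n hn ↦ h (n + 1) (by omega)⟩, fun h n hn ↦ ?_⟩
      cases n with
      | zero => exact h.1
      | succ n => exact h.2 n (by omega)
    rw [hrec]
    refine ⟨(hK 0).of_isClosed_subset ((hf 0).preimage_isClosed_of_isClosed (hK 0).isClosed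
      hcompact.isClosed) inter_subset_left, ?_⟩
    obtain ⟨x, hx, rfl⟩ := hsub 0 (hy 0 (by omega))
    exact ⟨x, hx, hy⟩

theorem exists_forall_iterate_mem {X : Type*} [TopologicalSpace X] [T2Space X]
    {f : X → X} {K : ℕ → Set X} (hf : ∀ n, ContinuousOn f (K n)) (hK : ∀ n, IsCompact (K n))
    (hK₀ : ∀ n, (K n).Nonempty) (hsub : ∀ n, K (n + 1) ⊆ f '' K n) :
    ∃ x, ∀ n, f^[n] x ∈ K n := by
  have hE := isCompact_and_nonempty_setOf_iterate_mem hf hK hK₀ hsub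
  obtain ⟨x, hx⟩ := IsCompact.nonempty_iInter_of_sequence_nonempty_isCompact_isClosed
    (fun N ↦ {x | ∀ n ≤ N, f^[n] x ∈ K n}) (fun N x hx n hn ↦ hx n (by omega))
    (fun N ↦ (hE N).2) (hE 0).1 fun N ↦ (hE N).1.isClosed
  exact ⟨x, fun n ↦ mem_iInter.1 hx n n le_rfl⟩

section Oscillation

variable {α : Type*} [LinearOrder α] [TopologicalSpace α]

/-- Arbitrarily close to `p` and on either side of it, the set `I` contains points which `f` sends
to either side of `p`. A side of `p` is encoded as a value of `cmp · p` other than `Ordering.eq`. -/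
def OscillatesAt (f : α → α) (I : Set α) (p : α) : Prop :=
  ∀ s t : Ordering, s ≠ .eq → t ≠ .eq → ∃ᶠ x in 𝓝[I] p, cmp x p = s ∧ cmp (f x) p = t

theorem oscillatesAt_iff {f : α → α} {I : Set α} {p : α} :
    OscillatesAt f I p ↔
      (∃ᶠ x in 𝓝[I] p, p < x ∧ f x < p) ∧ (∃ᶠ x in 𝓝[I] p, p < x ∧ p < f x) ∧
      (∃ᶠ x in 𝓝[I] p, x < p ∧ f x < p) ∧ (∃ᶠ x in 𝓝[I] p, x < p ∧ p < f x) := by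
  have forall_ne_eq (P : Ordering → Prop) : (∀ s, s ≠ .eq → P s) ↔ P .gt ∧ P .lt :=
    ⟨fun h ↦ ⟨h _ (by decide), h _ (by decide)⟩, fun h s hs ↦ by cases s <;> tauto⟩
  have hswap : OscillatesAt f I p ↔ ∀ s, s ≠ .eq → ∀ t, t ≠ .eq →
      ∃ᶠ x in 𝓝[I] p, cmp x p = s ∧ cmp (f x) p = t :=
    forall_congr' fun s ↦ forall_comm
  simp only [hswap, forall_ne_eq, cmp_eq_lt_iff, cmp_eq_gt_iff]
  tauto

end Oscillation

section Realization

theorem eventually_forall_mem_uIcc_cmp_eq {α : Type*} [LinearOrder α] [TopologicalSpace α]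
    [OrderTopology α] {u v p : α} {s : Ordering} (hs : s ≠ .eq) (hu : cmp u p = s)
    (hv : cmp v p = s) : ∀ᶠ y in 𝓝 p, ∀ x ∈ uIcc u v, cmp x y = s := by
  cases s with
  | eq => exact absurd rfl hs
  | lt =>
    simp only [cmp_eq_lt_iff] at hu hv ⊢
    filter_upwards [lt_mem_nhds (max_lt hu hv)] with y hy x hx using hx.2.trans_lt hy
  | gt =>
    simp only [cmp_eq_gt_iff] at hu hv ⊢
    filter_upwards [gt_mem_nhds (lt_min hu hv)] with y hy x hx using hy.trans_le hx.1

variable {α : Type*} [ConditionallyCompleteLinearOrder α] [TopologicalSpace α] [OrderTopology α]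
  [DenselyOrdered α] {f : α → α} {I W : Set α} {p : α}

namespace OscillatesAt

theorem exists_isCompact_image_mem_nhds (h : OscillatesAt f I p) (hI : I.OrdConnected)
    (hf : ContinuousOn f I) (hW : W ∈ 𝓝 p) {s : Ordering} (hs : s ≠ .eq) :
    ∃ K ⊆ W ∩ I, IsCompact K ∧ f '' K ∈ 𝓝 p ∧ ∀ᶠ y in 𝓝 p, ∀ x ∈ K, cmp x y = s := by
  obtain ⟨U, hU, hUW⟩ : ∃ U ∈ 𝓝 p, ∀ u ∈ U, ∀ v ∈ U, uIcc u v ⊆ W := by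
    have hsmall : Tendsto (fun z : α × α ↦ uIcc z.1 z.2) (𝓝 p ×ˢ 𝓝 p) (𝓝 p).smallSets :=
      tendsto_fst.uIcc tendsto_snd
    simpa only [prod_subset_iff, mem_ofPred_eq] using
      mem_prod_self_iff.1 (tendsto_smallSets_iff.1 hsmall W hW)
  have hUI : ∀ᶠ x in 𝓝[I] p, x ∈ U ∩ I :=
    inter_mem (mem_nhdsWithin_of_mem_nhds hU) self_mem_nhdsWithin
  obtain ⟨u, ⟨hup, hfu⟩, hu⟩ := ((h s .lt hs (by decide)).and_eventually hUI).exists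
  obtain ⟨v, ⟨hvp, hfv⟩, hv⟩ := ((h s .gt hs (by decide)).and_eventually hUI).exists
  have hsub : uIcc u v ⊆ I := hI.uIcc_subset hu.2 hv.2
  refine ⟨uIcc u v, subset_inter (hUW u hu.1 v hv.1) hsub, isCompact_uIcc, ?_,
    eventually_forall_mem_uIcc_cmp_eq hs hup hvp⟩
  rw [cmp_eq_lt_iff] at hfu
  rw [cmp_eq_gt_iff] at hfv
  exact mem_of_superset (Icc_mem_nhds hfu hfv) <|
    Icc_subset_uIcc.trans (intermediate_value_uIcc (hf.mono hsub))

-- Both sets are `{p}` if `s = .eq`, for all later comparisons are then `.eq` too and need no room.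
theorem exists_isCompact_of_mem (h : OscillatesAt f I p) (hI : I.OrdConnected)
    (hf : ContinuousOn f I) (hp : p ∈ I) (hfp : f p = p) (s : Ordering)
    (hpW : p ∈ W) (hW : s ≠ .eq → W ∈ 𝓝 p) :
    ∃ K V, IsCompact K ∧ K ⊆ W ∩ I ∧ p ∈ V ∧ (s ≠ .eq → V ∈ 𝓝 p) ∧ V ⊆ W ∧ V ⊆ f '' K ∧
      ∀ x ∈ K, ∀ y ∈ V, cmp x y = s := by
  by_cases hs : s = .eq
  · refine ⟨{p}, {p}, isCompact_singleton, ?_, rfl, (absurd hs ·), ?_, ?_, ?_⟩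
    · exact singleton_subset_iff.2 ⟨hpW, hp⟩
    · exact singleton_subset_iff.2 hpW
    · rw [image_singleton, hfp]
    · rintro x rfl y rfl
      rw [cmp_self_eq_eq, hs]
  · obtain ⟨K, hKsub, hK, himage, hcmp⟩ := h.exists_isCompact_image_mem_nhds hI hf (hW hs) hs
    have hV : W ∩ f '' K ∩ {y | ∀ x ∈ K, cmp x y = s} ∈ 𝓝 p :=
      inter_mem (inter_mem (hW hs) himage) hcmp
    exact ⟨K, _, hK, hKsub, mem_of_mem_nhds hV, fun _ ↦ hV, fun _ hy ↦ hy.1.1,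
      fun _ hy ↦ hy.1.2, fun x hx y hy ↦ hy.2 x hx⟩

theorem exists_isCompact_seq (h : OscillatesAt f I p) (hI : I.OrdConnected)
    (hf : ContinuousOn f I) (hp : p ∈ I) (hfp : f p = p) {s : ℕ → Ordering}
    (hs : ∀ n, s n = .eq → s (n + 1) = .eq) :
    ∃ K : ℕ → Set α, (∀ n, K n ⊆ I) ∧ (∀ n, IsCompact (K n)) ∧ (∀ n, (K n).Nonempty) ∧
      (∀ n, K (n + 1) ⊆ f '' K n) ∧ ∀ m n, m < n → ∀ x ∈ K m, ∀ y ∈ K n, cmp x y = s m := by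
  choose K V hK hKsub hpV hV hVW hVK hcmp using
    fun n (W : {W : Set α // p ∈ W ∧ (s n ≠ .eq → W ∈ 𝓝 p)}) ↦
      h.exists_isCompact_of_mem hI hf hp hfp (s n) W.2.1 W.2.2
  let W : ∀ n, {W : Set α // p ∈ W ∧ (s n ≠ .eq → W ∈ 𝓝 p)} :=
    Nat.rec ⟨univ, mem_univ p, fun _ ↦ univ_mem⟩
      fun n W ↦ ⟨V n W, hpV n W, fun hn ↦ hV n W (mt (hs n) hn)⟩
  have hanti : Antitone fun n ↦ (W n).1 := antitone_nat_of_succ_le fun n ↦ hVW n (W n)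
  refine ⟨fun n ↦ K n (W n), fun n ↦ (hKsub n _).trans inter_subset_right, fun n ↦ hK n _,
    fun n ↦ image_nonempty.1 ⟨p, hVK n _ (hpV n _)⟩, fun n ↦ ?_, fun m n hmn x hx y hy ↦ ?_⟩
  · exact ((hKsub (n + 1) _).trans inter_subset_left).trans (hVK n (W n))
  · exact hcmp m (W m) x hx y (hanti (Nat.succ_le_of_lt hmn) (hKsub n _ hy).1)

theorem exists_hasPattern_iterate (h : OscillatesAt f I p) (hI : I.OrdConnected)
    (hf : ContinuousOn f I) (hp : p ∈ I) (hfp : f p = p) {s : ℕ → Ordering}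
    (hs : ∀ n, s n = .eq → s (n + 1) = .eq) :
    ∃ q ∈ I, HasPattern s fun n ↦ f^[n] q := by
  obtain ⟨K, hKI, hK, hK₀, hsub, hcmp⟩ := h.exists_isCompact_seq hI hf hp hfp hs
  obtain ⟨q, hq⟩ := exists_forall_iterate_mem (fun n ↦ hf.mono (hKI n)) hK hK₀ hsub
  exact ⟨q, hKI 0 (hq 0), fun m n hmn ↦ hcmp m n hmn _ (hq m) _ (hq n)⟩

end OscillatesAt

end Realization

section Limits

variable {α : Type*} [ConditionallyCompleteLinearOrder α] [TopologicalSpace α] [OrderTopology α]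
  {s : ℕ → Ordering} {x : ℕ → α}

namespace HasPattern

theorem exists_tendsto_lt (hx : HasPattern s x) (hb : BddAbove (range x))
    (hs : ∃ᶠ n in atTop, s n = .lt) :
    ∃ l, Tendsto x (atTop ⊓ 𝓟 {n | s n = .lt}) (𝓝 l) ∧ ∀ n, s n = .lt → x n < l := by
  have hlt {m n : ℕ} (hmn : m < n) (hm : s m = .lt) : x m < x n :=
    (cmp_eq_lt_iff _ _).1 ((hx hmn).trans hm)
  have hlub : IsLUB (x '' {n | s n = .lt}) (sSup (x '' {n | s n = .lt})) :=
    isLUB_csSup (Set.Nonempty.image x hs.exists) (hb.mono (image_subset_range _ _))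
  refine ⟨sSup (x '' {n | s n = .lt}), tendsto_order.2 ⟨fun c hc ↦ ?_, fun c hc ↦ ?_⟩,
    fun m hm ↦ ?_⟩
  · obtain ⟨_, ⟨m, hm, rfl⟩, hcm⟩ := (lt_isLUB_iff hlub).1 hc
    exact eventually_inf_principal.2 <|
      (eventually_gt_atTop m).mono fun n hmn _ ↦ hcm.trans (hlt hmn hm)
  · exact eventually_inf_principal.2 <|
      .of_forall fun n hn ↦ (hlub.1 (mem_image_of_mem x hn)).trans_lt hc
  · obtain ⟨n, hn, hmn⟩ := (hs.and_eventually (eventually_gt_atTop m)).exists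
    exact (hlt hmn hm).trans_le (hlub.1 (mem_image_of_mem x hn))

theorem exists_tendsto (hx : HasPattern s x) (hb : BddBelow (range x)) (ha : BddAbove (range x))
    {t : Ordering} (ht : t ≠ .eq) (hs : ∃ᶠ n in atTop, s n = t) :
    ∃ l, Tendsto x (atTop ⊓ 𝓟 {n | s n = t}) (𝓝 l) ∧ ∀ n, s n = t → cmp (x n) l = t := by
  cases t with
  | eq => exact absurd rfl ht
  | lt => simpa only [cmp_eq_lt_iff] using hx.exists_tendsto_lt ha hs
  | gt =>
    simp only [cmp_eq_gt_iff]
    simpa only [Ordering.swap_eq_lt] using!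
      hx.dual.exists_tendsto_lt hb.dual (by simpa only [Ordering.swap_eq_lt])

theorem exists_isFixedPt_oscillatesAt {f : α → α} {I : Set α} (hx : HasPattern s x)
    (hI : IsCompact I) (hf : ContinuousOn f I) (hxI : ∀ n, x n ∈ I)
    (hfx : ∀ n, f (x n) = x (n + 1))
    (hs : ∀ t u, t ≠ .eq → u ≠ .eq → ∃ᶠ n in atTop, s n = t ∧ s (n + 1) = u) :
    ∃ p ∈ I, f p = p ∧ OscillatesAt f I p := by
  have : Nonempty α := ⟨x 0⟩
  have hsub : range x ⊆ I := range_subset_iff.2 hxI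
  have hfreq (t) (ht : t ≠ .eq) : ∃ᶠ n in atTop, s n = t := (hs t t ht ht).mono fun _ h ↦ h.1
  choose! l hl hside using fun t ht ↦
    hx.exists_tendsto (hI.bddBelow.mono hsub) (hI.bddAbove.mono hsub) ht (hfreq t ht)
  have hlI (t) (ht : t ≠ .eq) : l t ∈ I :=
    have : (atTop ⊓ 𝓟 {n | s n = t}).NeBot := frequently_mem_iff_neBot.1 (hfreq t ht)
    hI.isClosed.mem_of_tendsto (hl t ht) (.of_forall hxI)
  have hl' (t) (ht : t ≠ .eq) : Tendsto x (atTop ⊓ 𝓟 {n | s n = t}) (𝓝[I] l t) :=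
    tendsto_nhdsWithin_iff.2 ⟨hl t ht, .of_forall hxI⟩
  have hfl (t u) (ht : t ≠ .eq) (hu : u ≠ .eq) : f (l t) = l u := by
    have : (atTop ⊓ 𝓟 {n | s n = t ∧ s (n + 1) = u}).NeBot :=
      frequently_mem_iff_neBot.1 (hs t u ht hu)
    have hft : Tendsto (fun n ↦ x (n + 1)) (atTop ⊓ 𝓟 {n | s n = t ∧ s (n + 1) = u})
        (𝓝 (f (l t))) :=
      (((hf _ (hlI t ht)).tendsto.comp (hl' t ht)).congr hfx).mono_left <|
        inf_le_inf_left _ <| principal_mono.2 fun _ h ↦ h.1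
    refine tendsto_nhds_unique hft <| (hl u hu).comp <| tendsto_inf.2
      ⟨(tendsto_add_atTop_nat 1).mono_left inf_le_left, tendsto_principal.2 ?_⟩
    exact eventually_inf_principal.2 <| .of_forall fun _ h ↦ h.2
  have hlt : Ordering.lt ≠ .eq := by decide
  have hl_eq (t) (ht : t ≠ .eq) : l t = l .lt := (hfl _ t hlt ht).symm.trans (hfl _ _ hlt hlt)
  refine ⟨l .lt, hlI _ hlt, hfl _ _ hlt hlt, fun t u ht hu ↦ ?_⟩
  rw [← hl_eq t ht]
  refine (hl' t ht).frequently (frequently_inf_principal.2 <| (hs t u ht hu).mono ?_)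
  rintro n ⟨hn, hn'⟩
  refine ⟨hn, hside t ht n hn, ?_⟩
  rw [hfx, hl_eq t ht, ← hl_eq u hu, hside u hu _ hn']

end HasPattern

end Limits

section Model

/-- A map of `[-1, 1]` in the first Sharkovsky class which oscillates at its fixed point `0`; note
that `modelMap 0 = 0` by the convention `0⁻¹ = 0`. -/
noncomputable def modelMap (x : ℝ) : ℝ := x * Real.cos x⁻¹ / 2

theorem modelMap_zero : modelMap 0 = 0 := by simp [modelMap]

theorem abs_modelMap_le (x : ℝ) : |modelMap x| ≤ |x| / 2 := by
  rw [modelMap, abs_div, abs_mul, abs_two]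
  gcongr
  exact mul_le_of_le_one_right (abs_nonneg x) (Real.abs_cos_le_one _)

theorem continuous_modelMap : Continuous modelMap := by
  rw [continuous_iff_continuousAt]
  intro x
  rcases eq_or_ne x 0 with rfl | hx
  · rw [ContinuousAt, modelMap_zero]
    refine squeeze_zero_norm abs_modelMap_le ?_
    exact (by fun_prop : Continuous fun x : ℝ ↦ |x| / 2).tendsto' 0 0 (by simp)
  · have : ContinuousAt (fun x : ℝ ↦ x⁻¹) x := continuousAt_inv₀ hx
    unfold modelMap
    fun_prop

theorem firstSharkovsky_modelMap : FirstSharkovsky (-1) 1 modelMap where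
  continuousOn := continuous_modelMap.continuousOn
  mapsTo x hx := abs_le.1 <| (abs_modelMap_le x).trans <| by linarith [abs_le.2 hx, abs_nonneg x]
  not_twoCycle := by
    rintro ⟨x, -, y, -, hxy, rfl, hyx⟩
    have hx := abs_modelMap_le x
    have hy := abs_modelMap_le (modelMap x)
    rw [hyx] at hy
    have hx₀ : x = 0 := abs_eq_zero.1 (by linarith [abs_nonneg x])
    exact hxy (by rw [hx₀, modelMap_zero])

theorem frequently_cos_inv_eq {c : ℝ} (hc : c ∈ Icc (-1) 1) :
    (∃ᶠ x in 𝓝[>] 0, Real.cos x⁻¹ = c) ∧ ∃ᶠ x in 𝓝[<] 0, Real.cos x⁻¹ = c := by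
  have hperiod (a : ℝ) : ∃ y ∈ Ioc a (a + 2 * Real.pi), Real.cos y = c := by
    obtain ⟨y, hy, hcos⟩ := Real.cos_periodic.exists_mem_Ioc Real.two_pi_pos (Real.arccos c) a
    exact ⟨y, hy, by rw [← hcos, Real.cos_arccos hc.1 hc.2]⟩
  have htop : ∃ᶠ y in atTop, Real.cos y = c := frequently_atTop.2 fun a ↦
    (hperiod a).imp fun y hy ↦ ⟨hy.1.1.le, hy.2⟩
  have hbot : ∃ᶠ y in atBot, Real.cos y = c := frequently_atBot.2 fun a ↦
    (hperiod (a - 2 * Real.pi)).imp fun y hy ↦ ⟨by linarith [hy.1.2], hy.2⟩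
  exact ⟨tendsto_inv_atTop_nhdsGT_zero.frequently (by simpa only [inv_inv]),
    tendsto_inv_atBot_nhdsLT_zero.frequently (by simpa only [inv_inv])⟩

theorem oscillatesAt_modelMap : OscillatesAt modelMap (Icc (-1) 1) 0 := by
  have hone := frequently_cos_inv_eq (c := 1) (by norm_num)
  have hneg := frequently_cos_inv_eq (c := -1) (by norm_num)
  simp only [frequently_nhdsWithin_iff, mem_Ioi, mem_Iio] at hone hneg
  rw [oscillatesAt_iff, nhdsWithin_eq_nhds.2 (Icc_mem_nhds (by norm_num) (by norm_num))]
  refine ⟨hneg.1.mono ?_, hone.1.mono ?_, hone.2.mono ?_, hneg.2.mono ?_⟩ <;>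
  · rintro x ⟨hcos, hx⟩
    refine ⟨hx, ?_⟩
    rw [modelMap, hcos]
    linarith

/-- The pattern `<, <, >, >, <, <, >, >, …`, in which each of the four transitions between the two
sides recurs. -/
def upUpDownDown (n : ℕ) : Ordering := if n % 4 < 2 then .lt else .gt

theorem upUpDownDown_ne_eq (n : ℕ) : upUpDownDown n ≠ .eq := by
  unfold upUpDownDown
  split_ifs <;> decide

theorem frequently_upUpDownDown (t u : Ordering) (ht : t ≠ .eq) (hu : u ≠ .eq) :
    ∃ᶠ n in atTop, upUpDownDown n = t ∧ upUpDownDown (n + 1) = u := by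
  obtain ⟨j, hjt, hju⟩ : ∃ j, upUpDownDown j = t ∧ upUpDownDown (j + 1) = u := by
    have : ∀ t u : Ordering, t ≠ .eq → u ≠ .eq →
      ∃ j < 4, upUpDownDown j = t ∧ upUpDownDown (j + 1) = u := by decide
    exact (this t u ht hu).imp fun _ h ↦ h.2
  have hperiod (N i : ℕ) : upUpDownDown (4 * N + i) = upUpDownDown i := by
    simp only [upUpDownDown, Nat.mul_add_mod]
  refine frequently_atTop.2 fun N ↦ ⟨4 * N + j, by omega, ?_, ?_⟩
  · rw [hperiod, hjt]
  · rw [add_assoc, hperiod, hju]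

end Model

section Universality

variable {a b p : ℝ} {f : ℝ → ℝ}

theorem OscillatesAt.isUniversalF1 (h : OscillatesAt f (Icc a b) p)
    (hf : ContinuousOn f (Icc a b)) (hp : p ∈ Icc a b) (hfp : f p = p) :
    IsUniversalF1 a b f := by
  intro c d _ g hg hg_maps hg_two x hx
  obtain ⟨s, hs⟩ := FirstSharkovsky.exists_hasPattern_iterate ⟨hg, hg_maps, hg_two⟩ hx
  obtain ⟨q, hq, hqs⟩ :=
    h.exists_hasPattern_iterate (s := s) ordConnected_Icc hf hp hfp fun _ ↦ hs.succ_eq_eq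
  exact ⟨q, hq, hs.lt_iff_lt hqs⟩

theorem IsUniversalF1.exists_isFixedPt_oscillatesAt (h : IsUniversalF1 a b f)
    (hf : ContinuousOn f (Icc a b)) (hmaps : MapsTo f (Icc a b) (Icc a b)) :
    ∃ p ∈ Icc a b, f p = p ∧ OscillatesAt f (Icc a b) p := by
  have hmodel := firstSharkovsky_modelMap
  obtain ⟨x, hx, hxs⟩ := oscillatesAt_modelMap.exists_hasPattern_iterate ordConnected_Icc
    hmodel.continuousOn (by norm_num) modelMap_zero fun n hn ↦ absurd hn (upUpDownDown_ne_eq n)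
  obtain ⟨q, hq, hxq⟩ :=
    h (-1) 1 (by norm_num) modelMap hmodel.continuousOn hmodel.mapsTo hmodel.not_twoCycle x hx
  exact (hxs.of_lt_iff_lt hxq).exists_isFixedPt_oscillatesAt isCompact_Icc hf
    (fun n ↦ hmaps.iterate n hq) (fun n ↦ (Function.iterate_succ_apply' f n q).symm)
    frequently_upUpDownDown

theorem frequently_nhdsWithin_gt_and_iff {I : Set ℝ} {P : ℝ → Prop} (hP : ¬ P p) :
    (∃ᶠ x in 𝓝[I] p, p < x ∧ P x) ↔ ∀ r > 0, ∃ x ∈ Icc p (p + r) ∩ I, P x := by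
  rw [(nhdsWithin_hasBasis Metric.nhds_basis_closedBall I).frequently_iff]
  refine forall₂_congr fun r _ ↦ exists_congr fun x ↦ ?_
  have hne : P x → p ≠ x := fun h ↦ by rintro rfl; exact hP h
  rw [Real.closedBall_eq_Icc]
  constructor
  · rintro ⟨⟨hx, hxI⟩, hpx, hPx⟩
    exact ⟨⟨⟨hpx.le, hx.2⟩, hxI⟩, hPx⟩
  · rintro ⟨⟨hx, hxI⟩, hPx⟩
    exact ⟨⟨⟨by linarith [hx.1, hx.2], hx.2⟩, hxI⟩, hx.1.lt_of_ne (hne hPx), hPx⟩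

theorem frequently_nhdsWithin_lt_and_iff {I : Set ℝ} {P : ℝ → Prop} (hP : ¬ P p) :
    (∃ᶠ x in 𝓝[I] p, x < p ∧ P x) ↔ ∀ r > 0, ∃ x ∈ Icc (p - r) p ∩ I, P x := by
  rw [(nhdsWithin_hasBasis Metric.nhds_basis_closedBall I).frequently_iff]
  refine forall₂_congr fun r _ ↦ exists_congr fun x ↦ ?_
  have hne : P x → x ≠ p := fun h ↦ by rintro rfl; exact hP h
  rw [Real.closedBall_eq_Icc]
  constructor
  · rintro ⟨⟨hx, hxI⟩, hxp, hPx⟩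
    exact ⟨⟨⟨hx.1, hxp.le⟩, hxI⟩, hPx⟩
  · rintro ⟨⟨hx, hxI⟩, hPx⟩
    exact ⟨⟨⟨hx.1, by linarith [hx.1, hx.2]⟩, hxI⟩, hx.2.lt_of_ne (hne hPx), hPx⟩

theorem oscillatesAt_iff_sInf_lt_lt_sSup {I : Set ℝ} (hp : p ∈ I) (hfp : f p = p)
    (hb : BddBelow (f '' I)) (ha : BddAbove (f '' I)) :
    OscillatesAt f I p ↔ ∀ r > (0 : ℝ),
      sInf (f '' (Icc p (p + r) ∩ I)) < p ∧ p < sSup (f '' (Icc p (p + r) ∩ I)) ∧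
      sInf (f '' (Icc (p - r) p ∩ I)) < p ∧ p < sSup (f '' (Icc (p - r) p ∩ I)) := by
  have hlt : ¬ f p < p := hfp.not_lt
  have hgt : ¬ p < f p := hfp.not_gt
  have hsub (J : Set ℝ) : f '' (J ∩ I) ⊆ f '' I := image_mono inter_subset_right
  have sInf_lt {J : Set ℝ} (hpJ : p ∈ J) : sInf (f '' (J ∩ I)) < p ↔ ∃ x ∈ J ∩ I, f x < p := by
    rw [csInf_lt_iff (hb.mono (hsub J)) ⟨f p, p, ⟨hpJ, hp⟩, rfl⟩, exists_mem_image]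
  have lt_sSup {J : Set ℝ} (hpJ : p ∈ J) : p < sSup (f '' (J ∩ I)) ↔ ∃ x ∈ J ∩ I, p < f x := by
    rw [lt_csSup_iff (ha.mono (hsub J)) ⟨f p, p, ⟨hpJ, hp⟩, rfl⟩, exists_mem_image]
  rw [oscillatesAt_iff, frequently_nhdsWithin_gt_and_iff (P := (f · < p)) hlt,
    frequently_nhdsWithin_gt_and_iff (P := (p < f ·)) hgt,
    frequently_nhdsWithin_lt_and_iff (P := (f · < p)) hlt,
    frequently_nhdsWithin_lt_and_iff (P := (p < f ·)) hgt]
  simp only [← forall_and]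
  refine forall₂_congr fun r hr ↦ ?_
  have hright : p ∈ Icc p (p + r) := ⟨le_rfl, by linarith⟩
  have hleft : p ∈ Icc (p - r) p := ⟨by linarith, le_rfl⟩
  rw [sInf_lt hright, lt_sSup hright, sInf_lt hleft, lt_sSup hleft]

theorem stmt_18_general (hf : ContinuousOn f (Icc a b))
    (hmaps : MapsTo f (Icc a b) (Icc a b)) :
    IsUniversalF1 a b f ↔
    ∃ p ∈ Icc a b, f p = p ∧
      ∀ r > (0 : ℝ),
        sInf (f '' (Icc p (p + r) ∩ Icc a b)) < p ∧
        p < sSup (f '' (Icc p (p + r) ∩ Icc a b)) ∧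
        sInf (f '' (Icc (p - r) p ∩ Icc a b)) < p ∧
        p < sSup (f '' (Icc (p - r) p ∩ Icc a b)) := by
  have hosc {p : ℝ} (hp : p ∈ Icc a b) (hfp : f p = p) :=
    oscillatesAt_iff_sInf_lt_lt_sSup hp hfp (bddBelow_Icc.mono hmaps.image_subset)
      (bddAbove_Icc.mono hmaps.image_subset)
  constructor
  · intro h
    obtain ⟨p, hp, hfp, hpo⟩ := h.exists_isFixedPt_oscillatesAt hf hmaps
    exact ⟨p, hp, hfp, (hosc hp hfp).1 hpo⟩
  · rintro ⟨p, hp, hfp, hpo⟩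
    exact ((hosc hp hfp).2 hpo).isUniversalF1 hf hp hfp

end Universality

/-- Characterization of universal maps in the first Sharkovsky class via infima and
suprema of images of small one-sided neighbourhoods of some fixed point. -/
theorem stmt_18 (a b : ℝ) (hab : a ≤ b) (f : ℝ → ℝ)
    (hf : ContinuousOn f (Set.Icc a b))
    (hmaps : Set.MapsTo f (Set.Icc a b) (Set.Icc a b))
    (hno2 : ¬ ∃ x ∈ Set.Icc a b, ∃ y ∈ Set.Icc a b, x ≠ y ∧ f x = y ∧ f y = x) :
    IsUniversalF1 a b f ↔
    ∃ p ∈ Set.Icc a b, f p = p ∧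
      ∀ r > (0 : ℝ),
        sInf (f '' (Set.Icc p (p + r) ∩ Set.Icc a b)) < p ∧
        p < sSup (f '' (Set.Icc p (p + r) ∩ Set.Icc a b)) ∧
        sInf (f '' (Set.Icc (p - r) p ∩ Set.Icc a b)) < p ∧
        p < sSup (f '' (Set.Icc (p - r) p ∩ Set.Icc a b)) :=
  stmt_18_general hf hmaps
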